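/- arXiv:1507.07601 — 5 statements merged into one kernel-verified Lean document; each statement's English description precedes it below -/
import Mathlib

section
/- Let e > 0 and p ∈ ℝ² satisfy e² > |p|²/2. Then for every V ∈ M(e,p) the vector (V₁−V₃, V₂−V₄) ∈ ℝ² is nonzero, and the map h_{e,p} : M(e,p) → S¹ defined by h_{e,p}(V) := (V₁−V₃, V₂−V₄)/|(V₁−V₃, V₂−V₄)| is a bijection onto the unit circle S¹ ⊂ ℝ², with inverse ζ ↦ ½( √(2e²−|p|²) ζ₁ + p₁, √(2e²−|p|²) ζ₂ + p₂, p₁ − √(2e²−|p|²) ζ₁, p₂ − √(2e²−|p|²) ζ₂ ). -/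
/-!
By the parallelogram identity `(a + b)² + (a - b)² = 2 (a² + b²)` in each coordinate pair, every
`V ∈ M(e,p)` satisfies `|(V₁-V₃, V₂-V₄)|² = 2e² - |p|²` (`Mset_diff_sq`). The right-hand side is
positive by hypothesis, so on `M(e,p)` the map `h` divides the difference vector by the constant
`r = √(2e² - |p|²) > 0`. Since `V` is determined by its sums `p` and its differences `r ζ`, the
displayed formula inverts `h`.
-/

open Matrix

/-- The energy-momentum set `M(e,p) ⊆ ℝ⁴`. -/
def Mset (e : ℝ) (p : Fin 2 → ℝ) : Set (Fin 4 → ℝ) :=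
  {Y | Y 0 ^ 2 + Y 1 ^ 2 + Y 2 ^ 2 + Y 3 ^ 2 = e ^ 2 ∧ Y 0 + Y 2 = p 0 ∧ Y 1 + Y 3 = p 1}

/-- The map `h_{e,p} : V ↦ (V₁−V₃, V₂−V₄)/|(V₁−V₃, V₂−V₄)|`. -/
noncomputable def hmap (V : Fin 4 → ℝ) : Fin 2 → ℝ :=
  (Real.sqrt ((V 0 - V 2) ^ 2 + (V 1 - V 3) ^ 2))⁻¹ • ![V 0 - V 2, V 1 - V 3]

/-- The claimed inverse `ζ ↦ ½(√(2e²−|p|²)ζ₁+p₁, √(2e²−|p|²)ζ₂+p₂, p₁−√(2e²−|p|²)ζ₁,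
p₂−√(2e²−|p|²)ζ₂)`. -/
noncomputable def ginv (e : ℝ) (p : Fin 2 → ℝ) (ζ : Fin 2 → ℝ) : Fin 4 → ℝ :=
  ![(Real.sqrt (2 * e ^ 2 - (p 0 ^ 2 + p 1 ^ 2)) * ζ 0 + p 0) / 2,
    (Real.sqrt (2 * e ^ 2 - (p 0 ^ 2 + p 1 ^ 2)) * ζ 1 + p 1) / 2,
    (p 0 - Real.sqrt (2 * e ^ 2 - (p 0 ^ 2 + p 1 ^ 2)) * ζ 0) / 2,
    (p 1 - Real.sqrt (2 * e ^ 2 - (p 0 ^ 2 + p 1 ^ 2)) * ζ 1) / 2]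

theorem Mset_diff_sq {e : ℝ} {p : Fin 2 → ℝ} {V : Fin 4 → ℝ} (hV : V ∈ Mset e p) :
    (V 0 - V 2) ^ 2 + (V 1 - V 3) ^ 2 = 2 * e ^ 2 - (p 0 ^ 2 + p 1 ^ 2) := by
  obtain ⟨h1, h2, h3⟩ := hV
  rw [← h1, ← h2, ← h3]
  ring

/-- For `e² > |p|²/2`, every `V ∈ M(e,p)` has `(V₁−V₃, V₂−V₄) ≠ 0`, and `h_{e,p}` is a bijection
from `M(e,p)` onto the unit circle, with the displayed inverse. -/
theorem stmt_2 (e : ℝ) (p : Fin 2 → ℝ) (he : 0 < e)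
    (hgt : (p 0 ^ 2 + p 1 ^ 2) / 2 < e ^ 2) :
    (∀ V ∈ Mset e p, (![V 0 - V 2, V 1 - V 3] : Fin 2 → ℝ) ≠ 0) ∧
    (∀ V ∈ Mset e p, hmap V ⬝ᵥ hmap V = 1 ∧ ginv e p (hmap V) = V) ∧
    (∀ ζ : Fin 2 → ℝ, ζ ⬝ᵥ ζ = 1 → ginv e p ζ ∈ Mset e p ∧ hmap (ginv e p ζ) = ζ) := by
  have hpos : 0 < 2 * e ^ 2 - (p 0 ^ 2 + p 1 ^ 2) := by linarith
  have hr : 0 < √(2 * e ^ 2 - (p 0 ^ 2 + p 1 ^ 2)) := Real.sqrt_pos.2 hpos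
  have hrr : √(2 * e ^ 2 - (p 0 ^ 2 + p 1 ^ 2)) ^ 2 = 2 * e ^ 2 - (p 0 ^ 2 + p 1 ^ 2) :=
    Real.sq_sqrt hpos.le
  refine ⟨fun V hV h0 => ?_, fun V hV => ?_, fun ζ hζ => ?_⟩
  · have hd := Mset_diff_sq hV
    have ha : V 0 - V 2 = 0 := by simpa using congrFun h0 0
    have hb : V 1 - V 3 = 0 := by simpa using congrFun h0 1
    rw [ha, hb] at hd
    linarith
  · have hd := Mset_diff_sq hV
    obtain ⟨-, h2, h3⟩ := hV
    unfold hmap ginv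
    rw [hd]
    set r := √(2 * e ^ 2 - (p 0 ^ 2 + p 1 ^ 2))
    constructor
    · simp only [dotProduct, Fin.sum_univ_two, Pi.smul_apply, smul_eq_mul, cons_val_zero,
        cons_val_one]
      field_simp
      linarith
    · funext i
      fin_cases i <;> simp [mul_inv_cancel_left₀ hr.ne'] <;> linarith
  · have hζ' : ζ 0 ^ 2 + ζ 1 ^ 2 = 1 := by
      simpa [dotProduct, Fin.sum_univ_two, sq] using hζ
    have hmem : ginv e p ζ ∈ Mset e p := by
      refine ⟨?_, ?_, ?_⟩
      · simp only [ginv, cons_val]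
        set r := √(2 * e ^ 2 - (p 0 ^ 2 + p 1 ^ 2))
        linear_combination r ^ 2 / 2 * hζ' + hrr / 2
      · simp only [ginv, cons_val]
        ring
      · simp only [ginv, cons_val]
        ring
    refine ⟨hmem, ?_⟩
    have hd := Mset_diff_sq hmem
    unfold hmap
    rw [hd]
    unfold ginv
    set r := √(2 * e ^ 2 - (p 0 ^ 2 + p 1 ^ 2))
    funext i
    fin_cases i <;> simp <;> field_simp <;> ring
end

section
/- Let e > 0 and p ∈ ℝ² satisfy e² > |p|²/2, and let ψ ∈ ℝ. Then the reflection I − 2 γ̂_ψ⊗γ̂_ψ maps M(e,p) into itself, and for every V ∈ M(e,p) one has h_{e,p}((I − 2 γ̂_ψ⊗γ̂_ψ)V) = (I − 2 e(ψ)⊗e(ψ)) h_{e,p}(V); that is, the bijection h_{e,p} intertwines the Boltzmann reflection on M(e,p) with the planar reflection I − 2 e(ψ)⊗e(ψ) on S¹. -/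
/-!
Since `γ̂_ψ` is `(e ψ, -e ψ)` scaled by `1/√2`, the reflection acts as
`V ↦ V - s • (e ψ, -e ψ)` with `s = ⟨(V₁ - V₃, V₂ - V₄), e ψ⟩` (`sub_smul_gammaHat`).
This fixes the momentum `(V₁ + V₃, V₂ + V₄)`, preserves `|V|²`, and acts on the relative velocity
`W = (V₁ - V₃, V₂ - V₄)` by `W ↦ W - 2 ⟨W, e ψ⟩ e ψ`, the planar reflection. That reflection is a
linear isometry, hence commutes with the normalization `W ↦ W / |W|`.
-/

open Matrix

/-- `e ψ = (cos ψ, sin ψ) ∈ ℝ²`. -/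
noncomputable def eVec (ψ : ℝ) : Fin 2 → ℝ := ![Real.cos ψ, Real.sin ψ]

/-- The Boltzmann unit collision vector `γ̂_ψ = (1/√2)(e ψ, −e ψ) ∈ ℝ⁴`. -/
noncomputable def gammaHat (ψ : ℝ) : Fin 4 → ℝ :=
  (Real.sqrt 2)⁻¹ • ![Real.cos ψ, Real.sin ψ, -Real.cos ψ, -Real.sin ψ]

/-- The Boltzmann reflection with the two factors `1/√2` multiplied out. -/
lemma sub_smul_gammaHat (V : Fin 4 → ℝ) (ψ : ℝ) :
    V - (2 * (V ⬝ᵥ gammaHat ψ)) • gammaHat ψ =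
      V - ((V 0 - V 2) * Real.cos ψ + (V 1 - V 3) * Real.sin ψ) •
        ![Real.cos ψ, Real.sin ψ, -Real.cos ψ, -Real.sin ψ] := by
  have h2 : (Real.sqrt 2)⁻¹ * (Real.sqrt 2)⁻¹ = 1 / 2 := by
    rw [← mul_inv, Real.mul_self_sqrt (by norm_num)]; norm_num
  rw [gammaHat, dotProduct_smul, smul_smul, smul_eq_mul]
  congr 2
  simp only [dotProduct, Fin.sum_univ_four, cons_val]
  linear_combination (2 * ((V 0 - V 2) * Real.cos ψ + (V 1 - V 3) * Real.sin ψ)) * h2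

/-- The reflection `I − 2γ̂_ψ⊗γ̂_ψ` maps `M(e,p)` into itself and is intertwined by `h_{e,p}`
with the planar reflection `I − 2 e(ψ)⊗e(ψ)` on the circle. -/
theorem stmt_3 (e : ℝ) (p : Fin 2 → ℝ) (he : 0 < e)
    (hgt : (p 0 ^ 2 + p 1 ^ 2) / 2 < e ^ 2) (ψ : ℝ) :
    (∀ V ∈ Mset e p, V - (2 * (V ⬝ᵥ gammaHat ψ)) • gammaHat ψ ∈ Mset e p) ∧
    (∀ V ∈ Mset e p,
      hmap (V - (2 * (V ⬝ᵥ gammaHat ψ)) • gammaHat ψ)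
        = hmap V - (2 * (hmap V ⬝ᵥ eVec ψ)) • eVec ψ) := by
  have hcs := Real.sin_sq_add_cos_sq ψ
  refine ⟨?_, ?_⟩
  · rintro V ⟨h1, h2, h3⟩
    rw [sub_smul_gammaHat]
    refine ⟨?_, ?_, ?_⟩ <;> simp only [Pi.sub_apply, Pi.smul_apply, smul_eq_mul, cons_val]
    · linear_combination
        h1 + 2 * ((V 0 - V 2) * Real.cos ψ + (V 1 - V 3) * Real.sin ψ) ^ 2 * hcs
    · linear_combination h2
    · linear_combination h3
  · intro V _
    rw [sub_smul_gammaHat]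
    set s := (V 0 - V 2) * Real.cos ψ + (V 1 - V 3) * Real.sin ψ with hs
    -- The planar reflection preserves the length of the relative velocity.
    have hnorm : (V 0 - s * Real.cos ψ - (V 2 - s * -Real.cos ψ)) ^ 2
        + (V 1 - s * Real.sin ψ - (V 3 - s * -Real.sin ψ)) ^ 2
        = (V 0 - V 2) ^ 2 + (V 1 - V 3) ^ 2 := by
      rw [hs]
      linear_combination
        4 * ((V 0 - V 2) * Real.cos ψ + (V 1 - V 3) * Real.sin ψ) ^ 2 * hcs
    simp only [hmap, eVec, Pi.sub_apply, Pi.smul_apply, smul_eq_mul, cons_val, hnorm]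
    ext i
    fin_cases i <;>
      simp [dotProduct, Fin.sum_univ_two, hs] <;> ring
end

section
/- Let G be the subgroup of O(4) generated by {I − 2 γ̂_ψ⊗γ̂_ψ : ψ ∈ ℝ}. For V ∈ ℝ⁴ set e := |V| and p := (V₁+V₃, V₂+V₄). If e² > |p|²/2, then the orbit G·V := {gV : g ∈ G} equals the energy–momentum set M(e,p); if e² = |p|²/2, then G·V is the singleton {(p₁/2, p₂/2, p₁/2, p₂/2)}. -/
/-!
The reflection across `γ̂_ψ^⊥` moves `W` along `(e ψ, -e ψ)`, so it keeps the momentum, and it is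
an isometry, so it keeps the energy; hence so does every element of `G4`
(`invariants_of_mem_G4`). Conversely, if `Y ≠ V` have the same energy and momentum, then
`V - Y = (d, -d)` with `d ≠ 0`. Writing `d = r e(ψ)` in polar coordinates, the reflection across
the bisector `γ̂_ψ^⊥` of `V` and `Y` sends `V` to `Y` (`exists_mem_G4`). So the orbit of `V` is
always the full set of vectors sharing its energy and momentum (`orbit_eq`), and this set is a
single point when `e² = |p|²/2`, because `2e² - |p|² = (Y₁ - Y₃)² + (Y₂ - Y₄)²`.
-/

open Matrix

/-- The reflection matrix `I − 2u⊗u`. -/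
noncomputable def reflMat {n : ℕ} (u : Fin n → ℝ) : Matrix (Fin n) (Fin n) ℝ :=
  1 - (2 : ℝ) • vecMulVec u u

/-- The subgroup `G` of O(4) generated by the Boltzmann reflections `I − 2γ̂_ψ⊗γ̂_ψ`. -/
noncomputable def G4 : Subgroup (Matrix.orthogonalGroup (Fin 4) ℝ) :=
  Subgroup.closure
    {g : Matrix.orthogonalGroup (Fin 4) ℝ |
      ∃ ψ : ℝ, (g : Matrix (Fin 4) (Fin 4) ℝ) = reflMat (gammaHat ψ)}

lemma reflMat_gammaHat_mulVec (ψ : ℝ) (W : Fin 4 → ℝ) :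
    reflMat (gammaHat ψ) *ᵥ W =
      W - ((W 0 - W 2) * Real.cos ψ + (W 1 - W 3) * Real.sin ψ) •
        ![Real.cos ψ, Real.sin ψ, -Real.cos ψ, -Real.sin ψ] := by
  have h2 : (Real.sqrt 2)⁻¹ ^ 2 = 1 / 2 := by
    rw [inv_pow, Real.sq_sqrt (by norm_num)]; norm_num
  have hdot : gammaHat ψ ⬝ᵥ W =
      (Real.sqrt 2)⁻¹ * ((W 0 - W 2) * Real.cos ψ + (W 1 - W 3) * Real.sin ψ) := by
    simp [gammaHat, dotProduct, Fin.sum_univ_four]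
    ring
  rw [reflMat, sub_mulVec, one_mulVec, smul_mulVec, vecMulVec_mulVec, hdot]
  ext i
  simp only [gammaHat, Pi.sub_apply, Pi.smul_apply, smul_eq_mul, MulOpposite.smul_eq_mul_unop,
    MulOpposite.unop_op]
  linear_combination (-2 * ((W 0 - W 2) * Real.cos ψ + (W 1 - W 3) * Real.sin ψ) *
    ![Real.cos ψ, Real.sin ψ, -Real.cos ψ, -Real.sin ψ] i) * h2

lemma gammaHat_dotProduct_self (ψ : ℝ) : gammaHat ψ ⬝ᵥ gammaHat ψ = 1 := by
  have h2 : (Real.sqrt 2)⁻¹ ^ 2 = 1 / 2 := by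
    rw [inv_pow, Real.sq_sqrt (by norm_num)]; norm_num
  simp only [gammaHat, dotProduct, Fin.sum_univ_four, Pi.smul_apply, smul_eq_mul, cons_val]
  linear_combination (2 * (Real.cos ψ ^ 2 + Real.sin ψ ^ 2)) * h2 + Real.sin_sq_add_cos_sq ψ

lemma reflMat_mem_orthogonalGroup {n : ℕ} {u : Fin n → ℝ} (hu : u ⬝ᵥ u = 1) :
    reflMat u ∈ Matrix.orthogonalGroup (Fin n) ℝ := by
  have hT : (reflMat u)ᵀ = reflMat u := by
    simp [reflMat, transpose_vecMulVec]
  rw [Matrix.mem_orthogonalGroup_iff, hT]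
  have hP : vecMulVec u u * vecMulVec u u = vecMulVec u u := by
    rw [vecMulVec_mul_vecMulVec, hu, one_smul]
  simp only [reflMat, sub_mul, mul_sub, one_mul, mul_one, smul_mul_assoc, mul_smul_comm, hP]
  module

/-- `Y` and `W` have the same energy and the same momentum. -/
def SameInvariants (Y W : Fin 4 → ℝ) : Prop :=
  Y 0 ^ 2 + Y 1 ^ 2 + Y 2 ^ 2 + Y 3 ^ 2 = W 0 ^ 2 + W 1 ^ 2 + W 2 ^ 2 + W 3 ^ 2 ∧
    Y 0 + Y 2 = W 0 + W 2 ∧ Y 1 + Y 3 = W 1 + W 3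

lemma SameInvariants.trans {X Y Z : Fin 4 → ℝ} (h : SameInvariants X Y)
    (h' : SameInvariants Y Z) : SameInvariants X Z :=
  ⟨h.1.trans h'.1, h.2.1.trans h'.2.1, h.2.2.trans h'.2.2⟩

lemma SameInvariants.symm {X Y : Fin 4 → ℝ} (h : SameInvariants X Y) : SameInvariants Y X :=
  ⟨h.1.symm, h.2.1.symm, h.2.2.symm⟩

lemma sameInvariants_reflMat (ψ : ℝ) (W : Fin 4 → ℝ) :
    SameInvariants (reflMat (gammaHat ψ) *ᵥ W) W := by
  rw [reflMat_gammaHat_mulVec]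
  simp only [SameInvariants, Pi.sub_apply, Pi.smul_apply, smul_eq_mul, cons_val]
  refine ⟨?_, by ring, by ring⟩
  linear_combination (2 * ((W 0 - W 2) * Real.cos ψ + (W 1 - W 3) * Real.sin ψ) ^ 2) *
    Real.sin_sq_add_cos_sq ψ

lemma invariants_of_mem_G4 {g : Matrix.orthogonalGroup (Fin 4) ℝ} (hg : g ∈ G4) :
    ∀ W : Fin 4 → ℝ, SameInvariants ((g : Matrix (Fin 4) (Fin 4) ℝ) *ᵥ W) W := by
  refine Subgroup.closure_induction
    (p := fun (g : Matrix.orthogonalGroup (Fin 4) ℝ) _ => ∀ W : Fin 4 → ℝ,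
      SameInvariants ((g : Matrix (Fin 4) (Fin 4) ℝ) *ᵥ W) W) ?_ ?_ ?_ ?_ hg
  · rintro x ⟨ψ, hψ⟩ W
    rw [hψ]
    exact sameInvariants_reflMat ψ W
  · intro W
    simp [SameInvariants]
  · intro x y _ _ hx hy W
    have h := (hx ((y : Matrix (Fin 4) (Fin 4) ℝ) *ᵥ W)).trans (hy W)
    rwa [mulVec_mulVec] at h
  · intro x _ hx W
    have h := hx (((x⁻¹ : Matrix.orthogonalGroup (Fin 4) ℝ) : Matrix (Fin 4) (Fin 4) ℝ) *ᵥ W)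
    have hone : (x : Matrix (Fin 4) (Fin 4) ℝ) *
        ((x⁻¹ : Matrix.orthogonalGroup (Fin 4) ℝ) : Matrix (Fin 4) (Fin 4) ℝ) = 1 :=
      congrArg Subtype.val (mul_inv_cancel x)
    rw [mulVec_mulVec, hone, one_mulVec] at h
    exact h.symm

/-- Vectors with the same energy and momentum are exchanged by a single collision, across their
bisecting hyperplane. -/
lemma exists_mem_G4 {V Y : Fin 4 → ℝ} (h : SameInvariants Y V) :
    ∃ g ∈ G4, (g : Matrix (Fin 4) (Fin 4) ℝ) *ᵥ V = Y := by
  obtain ⟨hE, hp, hq⟩ := h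
  -- `d` is the displacement of the first velocity, encoded in `ℂ` for its polar form.
  set d : ℂ := ⟨V 0 - Y 0, V 1 - Y 1⟩ with hd
  have hre : ‖d‖ * Real.cos d.arg = V 0 - Y 0 := Complex.norm_mul_cos_arg d
  have him : ‖d‖ * Real.sin d.arg = V 1 - Y 1 := Complex.norm_mul_sin_arg d
  by_cases hr : ‖d‖ = 0
  · rw [hr, zero_mul] at hre him
    refine ⟨1, G4.one_mem, ?_⟩
    rw [OneMemClass.coe_one, one_mulVec]
    ext i
    fin_cases i <;> simp only [Fin.mk_one, Fin.zero_eta, Fin.reduceFinMk] <;> linarith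
  · have hψ : (V 0 - V 2) * Real.cos d.arg + (V 1 - V 3) * Real.sin d.arg = ‖d‖ := by
      apply mul_left_cancel₀ hr
      have hY2 : Y 2 = V 0 + V 2 - Y 0 := by linarith
      have hY3 : Y 3 = V 1 + V 3 - Y 1 := by linarith
      rw [hY2, hY3] at hE
      have hsq : ‖d‖ * ‖d‖ = (V 0 - Y 0) ^ 2 + (V 1 - Y 1) ^ 2 := by
        rw [← hre, ← him]
        linear_combination (-(‖d‖ ^ 2)) * Real.sin_sq_add_cos_sq d.arg
      rw [hsq]
      linear_combination (V 0 - V 2) * hre + (V 1 - V 3) * him - hE / 2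
    refine ⟨⟨reflMat (gammaHat d.arg), reflMat_mem_orthogonalGroup (gammaHat_dotProduct_self _)⟩,
      Subgroup.subset_closure ⟨d.arg, rfl⟩, ?_⟩
    rw [reflMat_gammaHat_mulVec, hψ]
    ext i
    fin_cases i <;> simp <;> linarith

lemma orbit_eq (V : Fin 4 → ℝ) :
    {Y | ∃ g ∈ G4, (g : Matrix (Fin 4) (Fin 4) ℝ) *ᵥ V = Y} = {Y | SameInvariants Y V} := by
  ext Y
  constructor
  · rintro ⟨g, hg, rfl⟩
    exact invariants_of_mem_G4 hg V
  · exact exists_mem_G4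

/-- With `e := |V|` and `p := (V₁+V₃, V₂+V₄)`: if `e² > |p|²/2` then the orbit `G·V` equals
`M(e,p)`, and if `e² = |p|²/2` then `G·V = {(p₁/2, p₂/2, p₁/2, p₂/2)}`. -/
theorem stmt_4 (V : Fin 4 → ℝ) :
    (V 0 ^ 2 + V 1 ^ 2 + V 2 ^ 2 + V 3 ^ 2 > ((V 0 + V 2) ^ 2 + (V 1 + V 3) ^ 2) / 2 →
      {Y | ∃ g ∈ G4, (g : Matrix (Fin 4) (Fin 4) ℝ) *ᵥ V = Y}
        = Mset (Real.sqrt (V 0 ^ 2 + V 1 ^ 2 + V 2 ^ 2 + V 3 ^ 2)) ![V 0 + V 2, V 1 + V 3]) ∧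
    (V 0 ^ 2 + V 1 ^ 2 + V 2 ^ 2 + V 3 ^ 2 = ((V 0 + V 2) ^ 2 + (V 1 + V 3) ^ 2) / 2 →
      {Y | ∃ g ∈ G4, (g : Matrix (Fin 4) (Fin 4) ℝ) *ᵥ V = Y}
        = {![(V 0 + V 2) / 2, (V 1 + V 3) / 2, (V 0 + V 2) / 2, (V 1 + V 3) / 2]}) := by
  rw [orbit_eq]
  constructor
  · intro _
    ext Y
    simp only [Mset, SameInvariants, Set.mem_ofPred_eq, cons_val]
    rw [Real.sq_sqrt (by positivity)]
  · intro h
    ext Y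
    rw [Set.mem_ofPred_eq, Set.mem_singleton_iff]
    constructor
    · rintro ⟨hE, hp, hq⟩
      have hs : (Y 0 - Y 2) ^ 2 + (Y 1 - Y 3) ^ 2 = 0 := by
        rw [← hp, ← hq] at h
        linear_combination 2 * h + 2 * hE
      have h0 : Y 0 - Y 2 = 0 := by
        apply pow_eq_zero_iff two_ne_zero |>.mp
        nlinarith [sq_nonneg (Y 0 - Y 2), sq_nonneg (Y 1 - Y 3)]
      have h1 : Y 1 - Y 3 = 0 := by
        apply pow_eq_zero_iff two_ne_zero |>.mp
        nlinarith [sq_nonneg (Y 0 - Y 2), sq_nonneg (Y 1 - Y 3)]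
      ext i
      fin_cases i <;> simp <;> linarith
    · rintro rfl
      simp only [SameInvariants, cons_val]
      refine ⟨?_, by ring, by ring⟩
      linear_combination -h
end

section
/- Suppose Φ : ℝ² × ℝ → ℝ is a Lebesgue measurable map satisfying Φ(v, |v|²) + Φ(w, |w|²) = Φ(v + w, |v|² + |w|²) for all v, w ∈ ℝ². Then there exist constants b ∈ ℝ² and c ∈ ℝ such that Φ(v, |v|²) = b·v + c|v|² for all v ∈ ℝ². -/
/-!
Put `f v = Φ (v, |v|²)`. By hypothesis `f v + f w` depends only on `v + w` and `|v|² + |w|²`; in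
particular `f` is additive on orthogonal pairs. Both properties pass to the even part `e` and the
odd part `g` of `f`, up to the factor `2` that is left out of their definitions below.

* Even part: if `|v| = |w|`, then `v = p + q` and `w = p - q` with `p ⟂ q`, so `e v = e w`. Hence
  `e v = a (|v|²)`, and `a` is additive on `[0, ∞)` by orthogonal additivity.
* Odd part: `g (m + d) + g (m - d)` depends only on `m` and `|d|`, so `d` may be replaced by a vector
  `d'` orthogonal to `m`, which gives `g (m + d) + g (m - d) = 2 g m`. With `g 0 = 0`
  this Jensen equation makes `g` additive.

Measurable additive maps are continuous, hence linear, so `g v = b · v` and `a t = c t`.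
-/

open Matrix

/-- A measurable additive function on `ℝ²` is linear. -/
lemma linear_of_measurable_additive_plane (g : (Fin 2 → ℝ) → ℝ) (hg : Measurable g)
    (hadd : ∀ x y, g (x + y) = g x + g y) : ∃ b : Fin 2 → ℝ, ∀ v, g v = b ⬝ᵥ v := by
  let G : (Fin 2 → ℝ) →+ ℝ := AddMonoidHom.mk' g hadd
  have hc : Continuous G := MeasureTheory.Measure.AddMonoidHom.continuous_of_measurable G hg
  refine ⟨![g ![1, 0], g ![0, 1]], fun v => ?_⟩
  have hsm : ∀ (t : ℝ) x, g (t • x) = t * g x := fun t x => map_real_smul G hc t x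
  have hv : v = v 0 • ![1, 0] + v 1 • ![0, 1] := by
    ext i; fin_cases i <;> simp
  conv_lhs => rw [hv, hadd, hsm, hsm]
  simp [dotProduct, Fin.sum_univ_two]
  ring

/-- A measurable function on `[0, ∞)`, extended by zero, that is additive there is linear there. -/
lemma linear_of_measurable_additive_ray (a : ℝ → ℝ) (ha : Measurable a)
    (h0 : ∀ t ≤ 0, a t = 0) (hadd : ∀ s t, 0 ≤ s → 0 ≤ t → a (s + t) = a s + a t) :
    ∃ c : ℝ, ∀ t, 0 ≤ t → a t = c * t := by
  -- The odd extension of `a` is additive on all of `ℝ`.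
  let A : ℝ →+ ℝ := AddMonoidHom.mk' (fun t => a t - a (-t)) (by
    have key : ∀ s t, 0 ≤ s → 0 ≤ s + t →
        a (s + t) - a (-(s + t)) = a s - a (-s) + (a t - a (-t)) := by
      intro s t hs hst
      rw [h0 (-(s + t)) (by linarith), h0 (-s) (by linarith)]
      rcases le_total 0 t with ht | ht
      · rw [h0 (-t) (by linarith), hadd s t hs ht]; ring
      · have := hadd (s + t) (-t) hst (by linarith)
        rw [add_neg_cancel_right] at this
        rw [h0 t ht]; linarith
    have key2 : ∀ s t, 0 ≤ s + t →
        a (s + t) - a (-(s + t)) = a s - a (-s) + (a t - a (-t)) := by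
      intro s t hst
      rcases le_total 0 s with hs | hs
      · exact key s t hs hst
      · have := key t s (by linarith) (by linarith)
        rw [add_comm t s] at this
        linarith
    intro s t
    rcases le_total 0 (s + t) with hst | hst
    · exact key2 s t hst
    · have := key2 (-s) (-t) (by linarith)
      rw [show -s + -t = -(s + t) by ring] at this
      simp only [neg_neg] at this
      linarith)
  have hc : Continuous A := MeasureTheory.Measure.AddMonoidHom.continuous_of_measurable A
    (ha.sub (ha.comp measurable_neg))
  refine ⟨A 1, fun t ht => ?_⟩
  have h1 := map_real_smul A hc t 1
  have h2 : A t = a t - a (-t) := rfl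
  rw [h0 (-t) (by linarith)] at h2
  simp only [smul_eq_mul, mul_one] at h1
  linarith

/-- An even, orthogonally additive, measurable function on `ℝ²` is a multiple of `|v|²`. -/
lemma even_part (e : (Fin 2 → ℝ) → ℝ) (he : Measurable e) (heven : ∀ v, e (-v) = e v)
    (h0 : e 0 = 0) (horth : ∀ v w, v ⬝ᵥ w = 0 → e (v + w) = e v + e w) :
    ∃ c : ℝ, ∀ v, e v = c * (v ⬝ᵥ v) := by
  have hrad : ∀ v w, v ⬝ᵥ v = w ⬝ᵥ w → e v = e w := by
    intro v w hvw
    have hpq : ((1 / 2 : ℝ) • (v + w)) ⬝ᵥ ((1 / 2 : ℝ) • (v - w)) = 0 := by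
      simp [dotProduct, Fin.sum_univ_two] at hvw ⊢
      linarith
    have h1 := horth _ _ hpq
    have h2 := horth ((1 / 2 : ℝ) • (v + w)) (-((1 / 2 : ℝ) • (v - w))) (by
      rw [dotProduct_neg, hpq, neg_zero])
    rw [heven] at h2
    have e1 : (1 / 2 : ℝ) • (v + w) + (1 / 2 : ℝ) • (v - w) = v := by module
    have e2 : (1 / 2 : ℝ) • (v + w) + -((1 / 2 : ℝ) • (v - w)) = w := by module
    rw [e1] at h1
    rw [e2] at h2
    rw [h1, h2]
  -- The radial profile; it vanishes for `t ≤ 0` because `√t = 0` there.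
  obtain ⟨c, hc⟩ := linear_of_measurable_additive_ray (fun t => e ![√t, 0])
    (he.comp (by
      refine measurable_pi_iff.2 fun i => ?_
      fin_cases i
      · exact Real.continuous_sqrt.measurable
      · exact measurable_const))
    (fun t ht => by
      have : (![√t, 0] : Fin 2 → ℝ) = 0 := by
        ext i; fin_cases i <;> simp [Real.sqrt_eq_zero_of_nonpos ht]
      simp only [this, h0])
    (fun s t hs ht => by
      have h1 : e ![√t, 0] = e ![0, √t] := hrad _ _ (by simp [dotProduct, Fin.sum_univ_two])
      have h2 := horth ![√s, 0] ![0, √t] (by simp [dotProduct, Fin.sum_univ_two])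
      rw [h1, ← h2]
      apply hrad
      simp [dotProduct, Fin.sum_univ_two, hs, ht, add_nonneg hs ht])
  refine ⟨c, fun v => ?_⟩
  have hv : 0 ≤ v ⬝ᵥ v := by
    simp [dotProduct, Fin.sum_univ_two]; nlinarith [sq_nonneg (v 0), sq_nonneg (v 1)]
  rw [← hc _ hv]
  apply hrad
  conv_rhs => simp [dotProduct, Fin.sum_univ_two]
  rw [← Real.mul_self_sqrt hv]
  simp [dotProduct, Fin.sum_univ_two]

/-- In the plane, every vector `d` can be turned orthogonal to a given `m` without changing its
length. -/
lemma exists_orthogonal_same_length (m d : Fin 2 → ℝ) :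
    ∃ d' : Fin 2 → ℝ, m ⬝ᵥ d' = 0 ∧ d' ⬝ᵥ d' = d ⬝ᵥ d := by
  by_cases hm : m = 0
  · exact ⟨d, by simp [hm], rfl⟩
  have hpos : 0 < m 0 * m 0 + m 1 * m 1 := by
    by_contra hcon
    apply hm
    ext i
    fin_cases i
    · simp; nlinarith [sq_nonneg (m 0), sq_nonneg (m 1)]
    · simp; nlinarith [sq_nonneg (m 0), sq_nonneg (m 1)]
  have hd : 0 ≤ d 0 * d 0 + d 1 * d 1 := by nlinarith [sq_nonneg (d 0), sq_nonneg (d 1)]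
  -- The quarter turn of `m`, rescaled to the length of `d`.
  let r := √((d 0 * d 0 + d 1 * d 1) / (m 0 * m 0 + m 1 * m 1))
  have hr : r * r = (d 0 * d 0 + d 1 * d 1) / (m 0 * m 0 + m 1 * m 1) :=
    Real.mul_self_sqrt (div_nonneg hd hpos.le)
  refine ⟨![-(r * m 1), r * m 0], ?_, ?_⟩
  · simp [dotProduct, Fin.sum_univ_two]; ring
  · simp only [dotProduct, Fin.sum_univ_two, Matrix.cons_val_zero, Matrix.cons_val_one]
    rw [show -(r * m 1) * -(r * m 1) + r * m 0 * (r * m 0)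
      = (r * r) * (m 0 * m 0 + m 1 * m 1) by ring, hr]
    exact div_mul_cancel₀ _ (ne_of_gt hpos)

/-- If `g` is odd and `g v + g w` depends only on `v + w` and `|v|² + |w|²`, then `g` is additive. -/
lemma odd_part (g : (Fin 2 → ℝ) → ℝ) (hodd : ∀ v, g (-v) = -g v)
    (hdep : ∀ v w v' w', v + w = v' + w' → v ⬝ᵥ v + w ⬝ᵥ w = v' ⬝ᵥ v' + w' ⬝ᵥ w' →
      g v + g w = g v' + g w') (x y : Fin 2 → ℝ) : g (x + y) = g x + g y := by
  have h0 : g 0 = 0 := by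
    have := hodd 0
    rw [neg_zero] at this
    linarith
  have horth : ∀ v w, v ⬝ᵥ w = 0 → g (v + w) = g v + g w := by
    intro v w hvw
    have := hdep (v + w) 0 v w (by simp) (by
      simp [add_dotProduct, dotProduct_add, hvw, dotProduct_comm w v])
    linarith
  have hjensen : ∀ m d, g (m + d) + g (m - d) = 2 * g m := by
    intro m d
    obtain ⟨d', hmd, hd⟩ := exists_orthogonal_same_length m d
    have h1 := hdep (m + d) (m - d) (m + d') (m + -d') (by abel) (by
      simp only [dotProduct, Fin.sum_univ_two, Pi.add_apply, Pi.sub_apply, Pi.neg_apply] at hd ⊢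
      linarith)
    rw [h1, horth m d' hmd, horth m (-d') (by rw [dotProduct_neg, hmd, neg_zero]), hodd]
    ring
  have hdouble : g (x + y) = 2 * g ((1 / 2 : ℝ) • (x + y)) := by
    have := hjensen ((1 / 2 : ℝ) • (x + y)) ((1 / 2 : ℝ) • (x + y))
    rw [sub_self, h0, show (1 / 2 : ℝ) • (x + y) + (1 / 2 : ℝ) • (x + y) = x + y by module] at this
    linarith
  have := hjensen ((1 / 2 : ℝ) • (x + y)) ((1 / 2 : ℝ) • (x - y))
  rw [show (1 / 2 : ℝ) • (x + y) + (1 / 2 : ℝ) • (x - y) = x by module,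
    show (1 / 2 : ℝ) • (x + y) - (1 / 2 : ℝ) • (x - y) = y by module] at this
  linarith

/-- If a measurable `Φ : ℝ² × ℝ → ℝ` satisfies
`Φ(v,|v|²) + Φ(w,|w|²) = Φ(v+w, |v|²+|w|²)` for all `v, w ∈ ℝ²`, then
`Φ(v,|v|²) = b·v + c|v|²` for some constants `b ∈ ℝ²`, `c ∈ ℝ`. -/
theorem stmt_5 (Φ : (Fin 2 → ℝ) × ℝ → ℝ) (hΦ : Measurable Φ)
    (h : ∀ v w : Fin 2 → ℝ,
      Φ (v, v ⬝ᵥ v) + Φ (w, w ⬝ᵥ w) = Φ (v + w, v ⬝ᵥ v + w ⬝ᵥ w)) :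
    ∃ (b : Fin 2 → ℝ) (c : ℝ), ∀ v : Fin 2 → ℝ,
      Φ (v, v ⬝ᵥ v) = b ⬝ᵥ v + c * (v ⬝ᵥ v) := by
  obtain ⟨f, hf⟩ : ∃ f : (Fin 2 → ℝ) → ℝ, ∀ v, f v = Φ (v, v ⬝ᵥ v) := ⟨_, fun _ => rfl⟩
  have hfm : Measurable f := by
    have hm : Measurable fun v : Fin 2 → ℝ => (v, v ⬝ᵥ v) := by
      refine measurable_id.prodMk ?_
      simp only [dotProduct, Fin.sum_univ_two]
      fun_prop
    rw [funext hf]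
    exact hΦ.comp hm
  have hdep : ∀ v w v' w', v + w = v' + w' → v ⬝ᵥ v + w ⬝ᵥ w = v' ⬝ᵥ v' + w' ⬝ᵥ w' →
      f v + f w = f v' + f w' := by
    intro v w v' w' h1 h2
    rw [hf, hf, hf, hf, h, h, h1, h2]
  have hf0 : f 0 = 0 := by
    have := h 0 0
    simp only [add_zero, dotProduct_zero] at this
    rw [hf, dotProduct_zero]
    linarith
  have horth : ∀ v w, v ⬝ᵥ w = 0 → f (v + w) = f v + f w := by
    intro v w hvw
    have := hdep (v + w) 0 v w (by simp) (by
      simp [add_dotProduct, dotProduct_add, hvw, dotProduct_comm w v])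
    linarith
  have hfneg : Measurable fun v => f (-v) := hfm.comp measurable_neg
  obtain ⟨c, hc⟩ := even_part (fun v => f v + f (-v)) (hfm.add hfneg)
    (fun v => by simp only [neg_neg]; ring) (by simp [hf0])
    (fun v w hvw => by
      have h1 := horth v w hvw
      have h2 := horth (-v) (-w) (by simpa using hvw)
      simp only [neg_add]
      linarith)
  obtain ⟨b, hb⟩ := linear_of_measurable_additive_plane (fun v => f v - f (-v)) (hfm.sub hfneg)
    (odd_part (fun v => f v - f (-v)) (fun v => by simp only [neg_neg]; ring)
      (fun v w v' w' h1 h2 => by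
        have h3 := hdep v w v' w' h1 h2
        have h4 := hdep (-v) (-w) (-v') (-w') (by rw [← neg_add, h1, neg_add]) (by simpa using h2)
        linarith))
  refine ⟨(1 / 2 : ℝ) • b, c / 2, fun v => ?_⟩
  have h1 := hc v
  have h2 := hb v
  rw [← hf, smul_dotProduct, smul_eq_mul]
  linarith
end

section
/- Suppose φ : ℝ² → ℝ is a Lebesgue measurable function satisfying φ(v′_ψ) + φ(v̄′_ψ) = φ(v) + φ(v̄) for all v, v̄ ∈ ℝ² and all ψ ∈ ℝ, where v′_ψ := v − ((v − v̄)·e(ψ)) e(ψ) and v̄′_ψ := v̄ + ((v − v̄)·e(ψ)) e(ψ). Then there exist constants a ∈ ℝ, b ∈ ℝ², c ∈ ℝ such that φ(v) = a + b·v + c|v|² for all v ∈ ℝ². -/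
/-!
The points `v, v′, v̄, v̄′` are the vertices of a rectangle with a side parallel to `e(ψ)`, so
the hypothesis says that `φ` has equal sums over the two diagonals of every rectangle. Rectangles
parallel to the axes (`ψ = 0`) show that `φ(x, y) = φ(0) + p(x) + q(y)` with `p(0) = q(0) = 0`.
Rectangles turned by 45 degrees (`ψ = π/4`) show that
`(p(x+u+w) - p(x+u) - p(x+w) + p(x)) + (q(y+u-w) - q(y+u) - q(y-w) + q(y)) = 0`,
so the second differences of `p` and of `q` do not depend on the base point. A measurable function
on the line with this property is a quadratic polynomial (`exists_quadratic_of_second_difference`),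
because measurable additive functions are linear. The same identity then forces `p` and `q` to
have equal leading coefficients.
-/

open Matrix

lemma eq_mul_of_measurable_additive (g : ℝ → ℝ) (hg : Measurable g)
    (hadd : ∀ x y, g (x + y) = g x + g y) (x : ℝ) : g x = x * g 1 := by
  have hc : Continuous (AddMonoidHom.mk' g hadd) :=
    MeasureTheory.Measure.AddMonoidHom.continuous_of_measurable _ hg
  simpa using map_real_smul (AddMonoidHom.mk' g hadd) hc x 1

/-- A measurable function on the line whose second differences do not depend on the base point is
a quadratic polynomial (`hd` at `0` gives `p 0 = 0`, so there is no constant term): the second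
difference is biadditive, hence bilinear, and subtracting the corresponding multiple of
`x ^ 2` leaves an additive function. -/
lemma exists_quadratic_of_second_difference (p : ℝ → ℝ) (hp : Measurable p)
    (hd : ∀ x u w, p (x + u + w) - p (x + u) - p (x + w) + p x = p (u + w) - p u - p w) :
    ∃ α c : ℝ, ∀ x, p x = α * x + c * x ^ 2 := by
  have hB : ∀ w u, p (u + w) - p u - p w = u * (p (1 + w) - p 1 - p w) := fun w u =>
    eq_mul_of_measurable_additive (fun u => p (u + w) - p u - p w) (by fun_prop)
      (fun x y => by linarith [hd x y w]) u
  have hB' : ∀ u w, p (u + w) - p u - p w = u * w * (p (1 + 1) - p 1 - p 1) := by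
    intro u w
    have h1 := hB 1 w
    rw [add_comm w 1] at h1
    rw [hB w u, mul_assoc, ← h1]
    ring
  set k := p (1 + 1) - p 1 - p 1 with hk
  have hlin := eq_mul_of_measurable_additive (fun x => p x - k / 2 * x ^ 2) (by fun_prop)
    (fun x y => by linear_combination hB' x y)
  refine ⟨p 1 - k / 2 * 1 ^ 2, k / 2, fun x => ?_⟩
  linear_combination hlin x

/-- A measurable collision invariant for hard disks,
i.e. a measurable `φ : ℝ² → ℝ` with `φ(v′_ψ) + φ(v̄′_ψ) = φ(v) + φ(v̄)` for all `v, v̄, ψ`,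
is necessarily of the form `φ(v) = a + b·v + c|v|²`. -/
theorem stmt_6 (φ : (Fin 2 → ℝ) → ℝ) (hφ : Measurable φ)
    (h : ∀ (v vb : Fin 2 → ℝ) (ψ : ℝ),
      φ (v - ((v - vb) ⬝ᵥ eVec ψ) • eVec ψ) + φ (vb + ((v - vb) ⬝ᵥ eVec ψ) • eVec ψ)
        = φ v + φ vb) :
    ∃ (a : ℝ) (b : Fin 2 → ℝ) (c : ℝ), ∀ v : Fin 2 → ℝ,
      φ v = a + b ⬝ᵥ v + c * (v ⬝ᵥ v) := by
  have H0 : ∀ x y : ℝ, φ ![0, y] + φ ![x, 0] = φ ![x, y] + φ ![0, 0] := by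
    intro x y
    have := h ![x, y] ![0, 0] 0
    simpa [eVec] using this
  have H1 : ∀ x y u w : ℝ, φ ![x + w, y - w] + φ ![x + u, y + u]
      = φ ![x + u + w, y + u - w] + φ ![x, y] := by
    intro x y u w
    have hs : √2 * √2 = (2 : ℝ) := Real.mul_self_sqrt (by norm_num)
    -- the displacement `(v - v̄)·e(π/4) e(π/4)` of the collision
    have hdisp : ((![x + u + w, y + u - w] - ![x, y]) ⬝ᵥ eVec (Real.pi / 4)) • eVec (Real.pi / 4)
        = ![u, u] := by
      ext i
      fin_cases i <;> simp [eVec, dotProduct, Fin.sum_univ_two] <;>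
        linear_combination u / 2 * hs
    have key := h ![x + u + w, y + u - w] ![x, y] (Real.pi / 4)
    rw [hdisp] at key
    rw [← key]
    congr 2
    · ext i
      fin_cases i <;> simp <;> ring
    · ext i
      fin_cases i <;> simp
  obtain ⟨p, hp⟩ : ∃ p : ℝ → ℝ, p = fun x => φ ![x, 0] - φ ![0, 0] := ⟨_, rfl⟩
  obtain ⟨q, hq⟩ : ∃ q : ℝ → ℝ, q = fun y => φ ![0, y] - φ ![0, 0] := ⟨_, rfl⟩
  have hpm : Measurable p := by
    rw [hp]
    refine (hφ.comp (measurable_pi_iff.2 fun i => ?_)).sub_const _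
    fin_cases i <;> simp <;> fun_prop
  have hqm : Measurable q := by
    rw [hq]
    refine (hφ.comp (measurable_pi_iff.2 fun i => ?_)).sub_const _
    fin_cases i <;> simp <;> fun_prop
  have hsplit : ∀ x y, φ ![x, y] = φ ![0, 0] + p x + q y := by
    intro x y
    simp only [hp, hq]
    linarith [H0 x y]
  have hp0 : p 0 = 0 := by simp [hp]
  have hq0 : q 0 = 0 := by simp [hq]
  have hpq : ∀ x y u w, (p (x + u + w) - p (x + u) - p (x + w) + p x)
      + (q (y + u - w) - q (y + u) - q (y - w) + q y) = 0 := by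
    intro x y u w
    have := H1 x y u w
    rw [hsplit (x + w), hsplit (x + u), hsplit (x + u + w), hsplit x] at this
    linarith
  obtain ⟨α, c, hpf⟩ := exists_quadratic_of_second_difference p hpm (fun x u w => by
    have h1 := hpq x 0 u w
    have h2 := hpq 0 0 u w
    simp only [zero_add, hp0] at h1 h2
    linarith)
  obtain ⟨β, c', hqf⟩ := exists_quadratic_of_second_difference q hqm (fun y u w => by
    have h1 := hpq 0 y u (-w)
    have h2 := hpq 0 0 u (-w)
    simp only [zero_add, hq0, sub_neg_eq_add] at h1 h2
    linarith)
  have hcc : c' = c := by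
    have := hpq 0 0 1 1
    simp only [hpf, hqf] at this
    linarith
  refine ⟨φ ![0, 0], ![α, β], c, fun v => ?_⟩
  have hv : v = ![v 0, v 1] := by
    ext i
    fin_cases i <;> rfl
  have hφv : φ v = φ ![0, 0] + p (v 0) + q (v 1) := by
    rw [← hsplit, ← hv]
  rw [hφv, hpf, hqf, hcc]
  simp only [dotProduct, Fin.sum_univ_two, cons_val_zero, cons_val_one]
  ring
end
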